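/- arXiv:2503.18088 — 11 statements merged into one kernel-verified Lean document; each statement's English description precedes it below -/
import Mathlib

section
/- Let G be a finitely generated nilpotent group, let σ be a 2-cocycle on G, and let N be a normal subgroup of G of finite index. Then Z(G,σ) ∩ N is contained in Z(N, σ|_N), and Z(G,σ) ∩ N has finite index in Z(N, σ|_N), where σ|_N denotes the restriction of σ to N × N. -/
/-- A (normalized) 2-cocycle on a discrete group `G` with values in the circle group. -/
def IsTwoCocycle {G : Type*} [Group G] (σ : G → G → Circle) : Prop :=
  (∀ g, σ g 1 = 1) ∧ (∀ g, σ 1 g = 1) ∧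
    ∀ g h k, σ g h * σ (g * h) k = σ h k * σ g (h * k)

/-- The twisted center `Z(G,σ)`: all central elements `g` such that `σ(g,h) = σ(h,g)`
for every `h ∈ G`. -/
def twistedCenter {G : Type*} [Group G] (σ : G → G → Circle) : Set G :=
  {g | g ∈ Subgroup.center G ∧ ∀ h, σ g h = σ h g}

/-- The collection of left cosets `b • A` with `b` ranging over `B`.  When `A` is (the
carrier of) a subgroup of (the subgroup with carrier) `B`, this is the coset space of
`A` in `B`, so `A` has finite index in `B` precisely when this collection is finite. -/
def cosetsIn {G : Type*} [Group G] (A B : Set G) : Set (Set G) :=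
  {C | ∃ b ∈ B, C = (fun a => b * a) '' A}

open scoped commutatorElement

/-- Subgroups of finitely generated central subgroups are finitely generated. -/
lemma aux_central_fg {G : Type*} [Group G] (C : Subgroup G) (hC : C ≤ Subgroup.center G)
    (hfg : C.FG) (K : Subgroup G) (hK : K ≤ C) : K.FG := by
  let : CommGroup C :=
    { (inferInstance : Group C) with
      mul_comm := fun a b => Subtype.ext ((Subgroup.mem_center_iff.mp (hC a.2) b).symm) }
  have : Group.FG C := (Group.fg_iff_subgroup_fg C).mpr hfg
  have : AddGroup.FG (Additive C) := GroupFG.iff_add_fg.mp inferInstance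
  have : Module.Finite ℤ (Additive C) := Module.Finite.iff_addGroup_fg.mpr inferInstance
  have : IsNoetherian ℤ (Additive C) := inferInstance
  have h1 : (AddSubgroup.toIntSubmodule (Subgroup.toAddSubgroup (K.subgroupOf C))).FG :=
    IsNoetherian.noetherian _
  have h2 : (Subgroup.toAddSubgroup (K.subgroupOf C)).FG := by
    rw [← AddSubgroup.toIntSubmodule_toAddSubgroup (Subgroup.toAddSubgroup (K.subgroupOf C))]
    exact (Submodule.fg_iff_addSubgroup_fg _).mp h1
  have h3 : (K.subgroupOf C).FG := (Subgroup.fg_iff_add_fg _).mpr h2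
  have h4 : ((K.subgroupOf C).map C.subtype).FG := by
    obtain ⟨T, hT, hTf⟩ := (Subgroup.fg_iff _).mp h3
    exact (Subgroup.fg_iff _).mpr ⟨C.subtype '' T, by rw [← MonoidHom.map_closure, hT], hTf.image _⟩
  rwa [Subgroup.map_subgroupOf_eq_of_le hK] at h4

/-- If the image of `H` is finitely generated then `H` is, up to `ker`, finitely generated. -/
lemma aux_lift {G Q : Type*} [Group G] [Group Q] (f : G →* Q) (H : Subgroup G)
    (h : (H.map f).FG) : ∃ S : Set G, S.Finite ∧ S ⊆ H ∧
      H ≤ Subgroup.closure S ⊔ (H ⊓ f.ker) := by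
  obtain ⟨T, hT, hTf⟩ := (Subgroup.fg_iff _).mp h
  have hsub : T ⊆ f '' (H : Set G) := by
    intro t ht
    have : t ∈ H.map f := hT ▸ Subgroup.subset_closure ht
    simpa using this
  obtain ⟨S, hSH, hSf, hST⟩ := Set.exists_subset_image_finite_and.mp ⟨T, hsub, hTf, (rfl : T = T)⟩
  refine ⟨S, hSf, hSH, ?_⟩
  intro x hx
  have h1 : f x ∈ (Subgroup.closure S).map f := by
    rw [MonoidHom.map_closure, ← hST, hT]
    exact Subgroup.mem_map_of_mem f hx
  obtain ⟨y, hy, hyx⟩ := h1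
  have hyH : y ∈ H := (Subgroup.closure_le H).mpr hSH hy
  have : x = y * (y⁻¹ * x) := by group
  rw [this]
  refine Subgroup.mul_mem_sup hy ⟨H.mul_mem (H.inv_mem hyH) hx, ?_⟩
  change f (y⁻¹ * x) = 1
  rw [map_mul, map_inv, hyx, inv_mul_cancel]

lemma aux_ext_fg {G Q : Type*} [Group G] [Group Q] (f : G →* Q)
    (hc : f.ker ≤ Subgroup.center G) (hk : f.ker.FG)
    (hQ : ∀ K : Subgroup Q, K.FG) (H : Subgroup G) : H.FG := by
  obtain ⟨S, hSf, hSH, hle⟩ := aux_lift f H (hQ _)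
  have : H = Subgroup.closure S ⊔ (H ⊓ f.ker) :=
    le_antisymm hle (sup_le ((Subgroup.closure_le H).mpr hSH) inf_le_left)
  rw [this]
  exact Subgroup.FG.sup ((Subgroup.fg_iff _).mpr ⟨S, rfl, hSf⟩)
    (aux_central_fg _ hc hk _ inf_le_right)

lemma aux_comm_mul_left {G : Type*} [Group G] (a b g : G) (h : ⁅b, g⁆ ∈ Subgroup.center G) :
    ⁅a * b, g⁆ = ⁅a, g⁆ * ⁅b, g⁆ := by
  have h1 := Subgroup.mem_center_iff.mp h a
  have : ⁅a * b, g⁆ = a * ⁅b, g⁆ * a⁻¹ * ⁅a, g⁆ := by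
    simp only [commutatorElement_def]; group
  rw [this, h1, mul_inv_cancel_right]
  exact (Subgroup.mem_center_iff.mp h _).symm

lemma aux_comm_mul_right {G : Type*} [Group G] (a g k : G) (h : ⁅a, k⁆ ∈ Subgroup.center G) :
    ⁅a, g * k⁆ = ⁅a, g⁆ * ⁅a, k⁆ := by
  have h1 := Subgroup.mem_center_iff.mp h g
  have : ⁅a, g * k⁆ = ⁅a, g⁆ * (g * ⁅a, k⁆ * g⁻¹) := by
    simp only [commutatorElement_def]; group
  rw [this, h1, mul_inv_cancel_right]

/-- Generation of a central commutator subgroup. -/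
lemma aux_comm_fg {G : Type*} [Group G] [Group.FG G] (B : Subgroup G)
    (hC : ⁅B, (⊤ : Subgroup G)⁆ ≤ Subgroup.center G)
    (S : Set G) (hS : S.Finite) (hSB : S ⊆ B)
    (hB : B ≤ Subgroup.closure S ⊔ Subgroup.center G) : ⁅B, (⊤ : Subgroup G)⁆.FG := by
  obtain ⟨T, hT, hTf⟩ := Group.fg_iff.mp (inferInstance : Group.FG G)
  have hz : ∀ b ∈ B, ∀ g : G, ⁅b, g⁆ ∈ Subgroup.center G := fun b hb g =>
    hC (Subgroup.commutator_mem_commutator hb (Subgroup.mem_top g))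
  rw [Subgroup.fg_iff]
  refine ⟨Set.image2 (fun s t => ⁅s, t⁆) S T, ?_, hS.image2 _ hTf⟩
  set K := Subgroup.closure (Set.image2 (fun s t : G => ⁅s, t⁆) S T) with hK
  apply le_antisymm
  · rw [hK, Subgroup.closure_le]
    rintro _ ⟨s, hs, t, -, rfl⟩
    exact Subgroup.commutator_mem_commutator (hSB hs) (Subgroup.mem_top t)
  · have hS1 : ∀ s ∈ S, ∀ g : G, ⁅s, g⁆ ∈ K := by
      intro s hs g
      have hg : g ∈ Subgroup.closure T := hT ▸ Subgroup.mem_top g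
      induction hg using Subgroup.closure_induction with
      | mem x hx => exact Subgroup.subset_closure ⟨s, hs, x, hx, rfl⟩
      | one => simp
      | mul x y _ _ hx hy =>
        rw [aux_comm_mul_right _ _ _ (hz s (hSB hs) y)]
        exact K.mul_mem hx hy
      | inv x _ hx =>
        have h1 := aux_comm_mul_right s x x⁻¹ (hz s (hSB hs) _)
        rw [mul_inv_cancel, commutatorElement_one_right] at h1
        rw [eq_inv_of_mul_eq_one_right h1.symm]
        exact K.inv_mem hx
    have hSB' : Subgroup.closure S ≤ B := (Subgroup.closure_le B).mpr hSB
    have hS2 : ∀ b ∈ Subgroup.closure S, ∀ g : G, ⁅b, g⁆ ∈ K := by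
      intro b hb g
      induction hb using Subgroup.closure_induction with
      | mem x hx => exact hS1 x hx g
      | one => simp
      | mul x y _ hy' hx hy =>
        rw [aux_comm_mul_left _ _ _ (hz y (hSB' hy') g)]
        exact K.mul_mem hx hy
      | inv x hx' hx =>
        have h1 := aux_comm_mul_left x x⁻¹ g (hz _ (hSB' (inv_mem hx')) _)
        rw [mul_inv_cancel, commutatorElement_one_left] at h1
        rw [eq_inv_of_mul_eq_one_right h1.symm]
        exact K.inv_mem hx
    rw [Subgroup.commutator_le]
    intro b hb g _
    obtain ⟨y, hy, z, hzc, rfl⟩ := Subgroup.mem_sup_of_normal_right.mp (hB hb)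
    have hz1 : ⁅z, g⁆ = 1 := by
      rw [commutatorElement_eq_one_iff_mul_comm]
      exact (Subgroup.mem_center_iff.mp hzc g).symm
    rw [aux_comm_mul_left _ _ _ (by rw [hz1]; exact one_mem _), hz1, mul_one]
    exact hS2 y hy g

lemma aux_noeth (n : ℕ) : ∀ (G : Type*) [Group G] [Group.FG G],
    (⊤ : Subgroup G).lowerCentralSeries n = ⊥ → ∀ H : Subgroup G, H.FG := by
  induction n with
  | zero =>
    intro G _ _ h H
    have : H = ⊥ := by
      rw [Subgroup.lowerCentralSeries_zero] at h
      exact le_bot_iff.mp (h ▸ le_top)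
    rw [this]; exact Subgroup.FG.bot
  | succ n ih =>
    intro G _ _ h H
    have hcen : (⊤ : Subgroup G).lowerCentralSeries n ≤ Subgroup.center G := by
      intro x hx
      rw [Subgroup.mem_center_iff]
      intro g
      have : ⁅x, g⁆ ∈ (⊤ : Subgroup G).lowerCentralSeries (n + 1) :=
        Subgroup.commutator_mem_commutator hx (Subgroup.mem_top g)
      rw [h, Subgroup.mem_bot, commutatorElement_eq_one_iff_mul_comm] at this
      exact this.symm
    set C := (⊤ : Subgroup G).lowerCentralSeries n with hCdef
    have hn : C.Normal := inferInstance
    have hker : (QuotientGroup.mk' C).ker = C := QuotientGroup.ker_mk' C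
    have hQ : ∀ K : Subgroup (G ⧸ C), K.FG := by
      apply ih (G ⧸ C)
      rw [← Subgroup.map_top_of_surjective _ (QuotientGroup.mk'_surjective C),
        ← Subgroup.map_lowerCentralSeries, ← hCdef, Subgroup.map_eq_bot_iff, hker]
    refine aux_ext_fg (QuotientGroup.mk' C) (by rwa [hker]) ?_ hQ H
    rw [hker]
    rcases n with _ | k
    · exact Group.fg_def.mp inferInstance
    · obtain ⟨S, hSf, hSB, hle⟩ := aux_lift (QuotientGroup.mk' C)
        ((⊤ : Subgroup G).lowerCentralSeries k) (hQ _)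
      refine aux_comm_fg _ hcen S hSf hSB (hle.trans (sup_le_sup le_rfl ?_))
      exact inf_le_right.trans (by rwa [hker])

lemma aux_nilp_fg (G : Type*) [Group G] [Group.IsNilpotent G] [Group.FG G] (H : Subgroup G) :
    H.FG := by
  obtain ⟨n, hn⟩ := Subgroup.nilpotent_iff_lowerCentralSeries.mp (inferInstance : Group.IsNilpotent G)
  exact aux_noeth n G hn H

lemma aux_pow_comm {Q : Type*} [Group Q] (a e : Q) (n : ℕ) (hc : ⁅a, e⁆ ∈ Subgroup.center Q)
    (h : a * e ^ n = e ^ n * a) : ⁅a ^ n, e⁆ = 1 := by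
  have h1 : ∀ k : ℕ, ⁅a ^ k, e⁆ = ⁅a, e⁆ ^ k := by
    intro k
    induction k with
    | zero => simp
    | succ k ih => rw [pow_succ, aux_comm_mul_left _ _ _ hc, ih, pow_succ]
  have h2 : ∀ k : ℕ, ⁅a, e ^ k⁆ = ⁅a, e⁆ ^ k := by
    intro k
    induction k with
    | zero => simp
    | succ k ih => rw [pow_succ, aux_comm_mul_right _ _ _ hc, ih, pow_succ]
  rw [h1, ← h2, commutatorElement_eq_one_iff_mul_comm, h]

lemma aux_ucs {E : Type*} [Group E] (n : ℕ) (i : ℕ) : ∀ (a : E), (∀ e : E, a * e ^ n = e ^ n * a) →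
    a ∈ Subgroup.upperCentralSeries E (i + 1) → a ^ n ^ i ∈ Subgroup.center E := by
  induction i with
  | zero => intro a _ h; simpa [Subgroup.upperCentralSeries_one] using h
  | succ i ih =>
    intro a ha h
    have key : a ^ n ∈ Subgroup.upperCentralSeries E (i + 1) := by
      rw [Subgroup.mem_upperCentralSeries_succ_iff]
      intro e
      set Z := Subgroup.upperCentralSeries E i with hZ
      have h1 : ⁅(a : E ⧸ Z), (e : E ⧸ Z)⁆ ∈ Subgroup.center (E ⧸ Z) := by
        rw [Subgroup.mem_center_iff]
        intro q
        obtain ⟨y, rfl⟩ := QuotientGroup.mk_surjective q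
        have h2 := Subgroup.mem_upperCentralSeries_succ_iff.mp
          (Subgroup.mem_upperCentralSeries_succ_iff.mp h e) y
        have h3 := (QuotientGroup.eq_one_iff _).mpr h2
        exact (commutatorElement_eq_one_iff_mul_comm.mp h3).symm
      have h4 := aux_pow_comm (a : E ⧸ Z) (e : E ⧸ Z) n h1
        (congrArg (fun x : E => (x : E ⧸ Z)) (ha e))
      exact (QuotientGroup.eq_one_iff _).mp h4
    have := ih (a ^ n) (fun e => ?_) key
    · rwa [← pow_mul, ← pow_succ'] at this
    · exact (Commute.pow_left (ha e) n)

/-- The central extension of `G` by the circle attached to a 2-cocycle. -/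
def TwExt {G : Type*} [Group G] {σ : G → G → Circle} (_ : IsTwoCocycle σ) : Type _ := Circle × G

noncomputable instance TwExt.group {G : Type*} [Group G] {σ : G → G → Circle} (hσ : IsTwoCocycle σ) :
    Group (TwExt hσ) :=
  @Group.ofLeftAxioms (Circle × G)
    ⟨fun x y => (x.1 * y.1 * σ x.2 y.2, x.2 * y.2)⟩
    ⟨fun x => (x.1⁻¹ * (σ x.2⁻¹ x.2)⁻¹, x.2⁻¹)⟩ ⟨(1, 1)⟩
    (by
      rintro ⟨a, g⟩ ⟨b, h⟩ ⟨c, k⟩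
      refine Prod.ext ?_ (mul_assoc g h k)
      change a * b * σ g h * c * σ (g * h) k = a * (b * c * σ h k) * σ g (h * k)
      calc a * b * σ g h * c * σ (g * h) k = a * b * c * (σ g h * σ (g * h) k) := by ac_rfl
        _ = a * b * c * (σ h k * σ g (h * k)) := by rw [hσ.2.2]
        _ = _ := by ac_rfl)
    (by
      rintro ⟨a, g⟩
      refine Prod.ext ?_ (one_mul g)
      change 1 * a * σ 1 g = a
      rw [hσ.2.1]; simp)
    (by
      rintro ⟨a, g⟩
      refine Prod.ext ?_ (inv_mul_cancel g)
      change a⁻¹ * (σ g⁻¹ g)⁻¹ * a * σ g⁻¹ g = 1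
      rw [mul_right_comm, mul_assoc, mul_assoc]; simp)

def TwExt.proj {G : Type*} [Group G] {σ : G → G → Circle} (hσ : IsTwoCocycle σ) :
    TwExt hσ →* G where
  toFun x := x.2
  map_one' := rfl
  map_mul' _ _ := rfl

lemma TwExt.comm_iff {G : Type*} [Group G] {σ : G → G → Circle} (hσ : IsTwoCocycle σ)
    (x y : TwExt hσ) : x * y = y * x ↔ σ x.2 y.2 = σ y.2 x.2 ∧ x.2 * y.2 = y.2 * x.2 := by
  have : x * y = y * x ↔
    (x.1 * y.1 * σ x.2 y.2 = y.1 * x.1 * σ y.2 x.2 ∧ x.2 * y.2 = y.2 * x.2) := Prod.ext_iff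
  rw [this, mul_comm y.1 x.1, mul_right_inj]

lemma TwExt.ker_le {G : Type*} [Group G] {σ : G → G → Circle} (hσ : IsTwoCocycle σ) :
    (TwExt.proj hσ).ker ≤ Subgroup.center (TwExt hσ) := by
  intro x hx
  have hx : x.2 = 1 := hx
  rw [Subgroup.mem_center_iff]
  intro y
  rw [TwExt.comm_iff, hx, hσ.1, hσ.2.1]
  simp

lemma TwExt.mem_center {G : Type*} [Group G] {σ : G → G → Circle} (hσ : IsTwoCocycle σ)
    (x : TwExt hσ) : x ∈ Subgroup.center (TwExt hσ) ↔ x.2 ∈ twistedCenter σ := by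
  rw [Subgroup.mem_center_iff]
  constructor
  · intro h
    have h' := fun g : G => (TwExt.comm_iff hσ _ _).mp (h ((1, g) : Circle × G))
    exact ⟨Subgroup.mem_center_iff.mpr fun g => (h' g).2, fun g => (h' g).1.symm⟩
  · intro h y
    exact (TwExt.comm_iff hσ _ _).mpr ⟨(h.2 _).symm, Subgroup.mem_center_iff.mp h.1 _⟩

/-- Abstract finiteness: `B` finitely generated, commutative, with powers in `A`. -/
lemma aux_cosets_finite {G : Type*} [Group G] (A B : Subgroup G) (hfg : B.FG)
    (hcomm : ∀ x ∈ B, ∀ y ∈ B, x * y = y * x) (m : ℕ) (hm : 0 < m)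
    (hpow : ∀ b ∈ B, b ^ m ∈ A) : (cosetsIn (A : Set G) (B : Set G)).Finite := by
  let : CommGroup B :=
    { (inferInstance : Group B) with
      mul_comm := fun a b => Subtype.ext (hcomm a a.2 b b.2) }
  have : Group.FG B := (Group.fg_iff_subgroup_fg B).mpr hfg
  have : Finite (B ⧸ A.subgroupOf B) := by
    refine CommGroup.finite_of_fg_isMulTorsion _ ?_
    intro q
    obtain ⟨b, rfl⟩ := QuotientGroup.mk_surjective q
    rw [isOfFinOrder_iff_pow_eq_one]
    refine ⟨m, hm, ?_⟩
    exact (QuotientGroup.eq_one_iff (b ^ m)).mpr (hpow b b.2)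
  let F : B ⧸ A.subgroupOf B → Set G := fun q => (fun a => (q.out : G) * a) '' (A : Set G)
  refine (Set.finite_range F).subset ?_
  rintro _ ⟨b, hb, rfl⟩
  refine ⟨((⟨b, hb⟩ : B) : B ⧸ A.subgroupOf B), ?_⟩
  obtain ⟨a, ha⟩ := QuotientGroup.mk_out_eq_mul (A.subgroupOf B) ⟨b, hb⟩
  have haA : ((a : B) : G) ∈ A := a.2
  have hout : ((((⟨b, hb⟩ : B) : B ⧸ A.subgroupOf B).out : B) : G) = b * ((a : B) : G) := by
    rw [ha]; rfl
  change (fun x => ((((⟨b, hb⟩ : B) : B ⧸ A.subgroupOf B).out : B) : G) * x) '' (A : Set G) = _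
  rw [hout]
  ext z
  constructor
  · rintro ⟨x, hx, rfl⟩
    exact ⟨_, A.mul_mem haA hx, (mul_assoc _ _ _).symm⟩
  · rintro ⟨x, hx, rfl⟩
    exact ⟨_, A.mul_mem (A.inv_mem haA) hx, by simp [mul_assoc]⟩

/-- Let `G` be a finitely generated nilpotent group, `σ` a 2-cocycle on
`G` and `N` a normal subgroup of finite index.  Then `Z(G,σ) ∩ N ⊆ Z(N, σ|_N)` and
`Z(G,σ) ∩ N` has finite index in `Z(N, σ|_N)` (both viewed inside `G`). -/
theorem twistedCenter_inter_finiteIndex_in_twistedCenter_of_subgroup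
    (G : Type*) [Group G] [Group.IsNilpotent G] [Group.FG G]
    (σ : G → G → Circle) (hσ : IsTwoCocycle σ)
    (N : Subgroup G) [N.Normal] (hN : N.index ≠ 0) :
    twistedCenter σ ∩ (N : Set G) ⊆
        Subtype.val '' twistedCenter (fun x y : N => σ x y) ∧
      (cosetsIn (twistedCenter σ ∩ (N : Set G))
        (Subtype.val '' twistedCenter (fun x y : N => σ x y))).Finite := by
  have hincl : twistedCenter σ ∩ (N : Set G) ⊆
      Subtype.val '' twistedCenter (fun x y : N => σ x y) := by
    rintro g ⟨hg, hgN⟩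
    exact ⟨⟨g, hgN⟩, ⟨Subgroup.mem_center_iff.mpr fun h =>
      Subtype.ext (Subgroup.mem_center_iff.mp hg.1 h), fun h => hg.2 h⟩, rfl⟩
  refine ⟨hincl, ?_⟩
  have : Group.IsNilpotent (TwExt hσ) := Subgroup.isNilpotent_of_ker_le_center (TwExt.proj hσ)
    (TwExt.ker_le hσ)
  let M : Subgroup (TwExt hσ) := N.comap (TwExt.proj hσ)
  let A : Subgroup G := (Subgroup.center (TwExt hσ)).map (TwExt.proj hσ) ⊓ N
  let B : Subgroup G := (M ⊓ Subgroup.centralizer (M : Set (TwExt hσ))).map (TwExt.proj hσ)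
  have hA : (A : Set G) = twistedCenter σ ∩ (N : Set G) := by
    ext g
    constructor
    · rintro ⟨⟨x, hx, rfl⟩, hg⟩
      exact ⟨(TwExt.mem_center hσ x).mp hx, hg⟩
    · rintro ⟨h, hg⟩
      exact ⟨⟨((1, g) : Circle × G), (TwExt.mem_center hσ _).mpr h, rfl⟩, hg⟩
  have hBc : ∀ x : TwExt hσ, x ∈ Subgroup.centralizer (M : Set (TwExt hσ)) ↔
      ∀ h ∈ N, σ h x.2 = σ x.2 h ∧ h * x.2 = x.2 * h := by
    intro x
    rw [Subgroup.mem_centralizer_iff]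
    constructor
    · intro h g hg
      exact (TwExt.comm_iff hσ ((1, g) : Circle × G) x).mp (h ((1, g) : Circle × G) hg)
    · intro h y hy
      exact (TwExt.comm_iff hσ y x).mpr (h y.2 hy)
  have hB : (B : Set G) = Subtype.val '' twistedCenter (fun x y : N => σ x y) := by
    ext g
    constructor
    · rintro ⟨x, ⟨hxM, hx⟩, rfl⟩
      have hx' := (hBc x).mp hx
      exact ⟨⟨x.2, hxM⟩, ⟨Subgroup.mem_center_iff.mpr fun h =>
        Subtype.ext (hx' h h.2).2, fun h => (hx' h h.2).1.symm⟩, rfl⟩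
    · rintro ⟨g, hg, rfl⟩
      refine ⟨((1, (g : G)) : Circle × G), ⟨g.2, (hBc _).mpr fun h hh => ?_⟩, rfl⟩
      exact ⟨(hg.2 ⟨h, hh⟩).symm,
        congrArg Subtype.val (Subgroup.mem_center_iff.mp hg.1 ⟨h, hh⟩)⟩
  rw [← hA, ← hB]
  obtain ⟨c, hc⟩ := Group.IsNilpotent.nilpotent (TwExt hσ)
  refine aux_cosets_finite A B (aux_nilp_fg G B) ?_ (N.index ^ c)
    (pow_pos (Nat.pos_of_ne_zero hN) c) ?_
  · rintro _ ⟨x, ⟨hxM, hx⟩, rfl⟩ _ ⟨y, ⟨hyM, hy⟩, rfl⟩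
    exact ((hBc y).mp hy x.2 hxM).2
  · rintro _ ⟨x, ⟨hxM, hx⟩, rfl⟩
    refine ⟨⟨x ^ N.index ^ c, ?_, map_pow _ _ _⟩, N.pow_mem hxM _⟩
    refine aux_ucs N.index c x (fun e => ?_) ?_
    · refine (Subgroup.mem_centralizer_iff.mp hx (e ^ N.index) ?_).symm
      change TwExt.proj hσ (e ^ N.index) ∈ N
      rw [map_pow]
      exact N.pow_index_mem _
    · exact Subgroup.upperCentralSeries_mono _ (Nat.le_succ c) (hc ▸ Subgroup.mem_top x)
end

section
/- Let G be a discrete group, N a central subgroup of G, ω a 2-cocycle on G/N, γ : N → 𝕋 a group homomorphism, c : G/N → G a section of the quotient map with c(e) = e, and let ω_γ(g,h) = γ(c(g)c(h)c(gh)⁻¹)ω(g,h). Then for every g ∈ G/N that is central in G/N and every h ∈ G/N, the commutator c(g)c(h)c(g)⁻¹c(h)⁻¹ lies in N and ω_γ(g,h)ω_γ(h,g)⁻¹ = γ(c(g)c(h)c(g)⁻¹c(h)⁻¹)·ω(g,h)ω(h,g)⁻¹. Consequently, a central element g of G/N lies in Z(G/N, ω_γ) if and only if γ(c(g)c(h)c(g)⁻¹c(h)⁻¹)·ω(g,h)ω(h,g)⁻¹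 = 1 for all h ∈ G/N. -/
open scoped Classical

/-- The extension of a homomorphism `γ : N → 𝕋` to all of `G`, sending elements outside
of `N` to `1`.  It is only ever applied to elements of `N`. -/
noncomputable def liftHom {G : Type*} [Group G] {N : Subgroup G} (γ : N →* Circle) :
    G → Circle :=
  fun g => if h : g ∈ N then γ ⟨g, h⟩ else 1

/-- Let `N` be a central subgroup of `G`, `ω` a 2-cocycle on `G/N`,
`γ : N → 𝕋` a homomorphism, `c : G/N → G` a section of the quotient map with `c(e) = e`,
and `ω_γ(g,h) = γ(c(g)c(h)c(gh)⁻¹)ω(g,h)`.  Then for every central `g ∈ G/N` and every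
`h ∈ G/N` the commutator `c(g)c(h)c(g)⁻¹c(h)⁻¹` lies in `N` and
`ω_γ(g,h)ω_γ(h,g)⁻¹ = γ(c(g)c(h)c(g)⁻¹c(h)⁻¹)·ω(g,h)ω(h,g)⁻¹`; consequently a central
element `g` of `G/N` lies in `Z(G/N, ω_γ)` if and only if
`γ(c(g)c(h)c(g)⁻¹c(h)⁻¹)·ω(g,h)ω(h,g)⁻¹ = 1` for all `h`. -/
theorem twistedCenter_cocycleOfSection_iff
    (G : Type*) [Group G] (N : Subgroup G) [N.Normal] (hcentral : N ≤ Subgroup.center G)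
    (ω : G ⧸ N → G ⧸ N → Circle) (hω : IsTwoCocycle ω)
    (γ : N →* Circle)
    (c : G ⧸ N → G) (hc : ∀ x : G ⧸ N, QuotientGroup.mk (c x) = x) (hc1 : c 1 = 1) :
    (∀ g ∈ Subgroup.center (G ⧸ N), ∀ h : G ⧸ N,
        c g * c h * (c g)⁻¹ * (c h)⁻¹ ∈ N ∧
        (liftHom γ (c g * c h * (c (g * h))⁻¹) * ω g h) *
            (liftHom γ (c h * c g * (c (h * g))⁻¹) * ω h g)⁻¹ =
          liftHom γ (c g * c h * (c g)⁻¹ * (c h)⁻¹) * (ω g h * (ω h g)⁻¹)) ∧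
      ∀ g ∈ Subgroup.center (G ⧸ N),
        (g ∈ twistedCenter (fun g h : G ⧸ N =>
            liftHom γ (c g * c h * (c (g * h))⁻¹) * ω g h) ↔
          ∀ h : G ⧸ N,
            liftHom γ (c g * c h * (c g)⁻¹ * (c h)⁻¹) * (ω g h * (ω h g)⁻¹) = 1) := by
  have key : ∀ g ∈ Subgroup.center (G ⧸ N), ∀ h : G ⧸ N,
      c g * c h * (c g)⁻¹ * (c h)⁻¹ ∈ N ∧
      (liftHom γ (c g * c h * (c (g * h))⁻¹) * ω g h) *
          (liftHom γ (c h * c g * (c (h * g))⁻¹) * ω h g)⁻¹ =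
        liftHom γ (c g * c h * (c g)⁻¹ * (c h)⁻¹) * (ω g h * (ω h g)⁻¹) := by
    intro g hg h
    have hcomm : h * g = g * h := Subgroup.mem_center_iff.mp hg h
    have h1 : c g * c h * (c g)⁻¹ * (c h)⁻¹ ∈ N := by
      rw [← QuotientGroup.eq_one_iff]
      simp only [QuotientGroup.mk_mul, QuotientGroup.mk_inv, hc]
      rw [← hcomm]
      group
    have h2 : c h * c g * (c (h * g))⁻¹ ∈ N := by
      rw [← QuotientGroup.eq_one_iff]
      simp only [QuotientGroup.mk_mul, QuotientGroup.mk_inv, hc]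
      group
    have h3 : c g * c h * (c (g * h))⁻¹ =
        (c g * c h * (c g)⁻¹ * (c h)⁻¹) * (c h * c g * (c (h * g))⁻¹) := by
      rw [hcomm]
      group
    have h4 : liftHom γ (c g * c h * (c (g * h))⁻¹) =
        liftHom γ (c g * c h * (c g)⁻¹ * (c h)⁻¹) *
          liftHom γ (c h * c g * (c (h * g))⁻¹) := by
      rw [h3]
      unfold liftHom
      rw [dif_pos (N.mul_mem h1 h2), dif_pos h1, dif_pos h2, ← map_mul]
      rfl
    refine ⟨h1, ?_⟩
    rw [h4, mul_inv]
    generalize liftHom γ (c h * c g * (c (h * g))⁻¹) = y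
    generalize liftHom γ (c g * c h * (c g)⁻¹ * (c h)⁻¹) = x
    rw [mul_mul_mul_comm, mul_assoc x y, mul_inv_cancel, mul_one]
  refine ⟨key, fun g hg => ⟨fun hz h => ?_, fun hz => ⟨hg, fun h => ?_⟩⟩⟩
  · rw [← (key g hg h).2]
    exact mul_inv_eq_one.mpr (hz.2 h)
  · have := hz h
    rw [← (key g hg h).2] at this
    exact mul_inv_eq_one.mp this
end

section
/- Let G be a discrete abelian group, σ a 2-cocycle on G, and set N = Z(G,σ). Let ω be a 2-cocycle on G/N such that the inflation Inf(ω) is cohomologous to σ. Then for every group homomorphism γ : N → 𝕋 and every section c : G/N → G of the quotient map with c(e) = e, the twisted center of G/N with respect to the 2-cocycle ω_γ(g,h) = γ(c(g)c(h)c(gh)⁻¹)ω(g,h) is trivial: Z(G/N, ω_γ) = {e}. -/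
open scoped Classical

/-- Let `G` be a discrete abelian group, `σ` a 2-cocycle on `G`, and
`N = Z(G,σ)` the twisted center (a subgroup).  Let `ω` be a 2-cocycle on `G/N` whose
inflation is cohomologous to `σ`.  Then for every homomorphism `γ : N → 𝕋` and every
section `c : G/N → G` of the quotient map with `c(e) = e`, the twisted center of `G/N`
with respect to `ω_γ(g,h) = γ(c(g)c(h)c(gh)⁻¹)ω(g,h)` is trivial. -/
theorem twistedCenter_quotient_by_twistedCenter_trivial
    (G : Type*) [CommGroup G] (σ : G → G → Circle) (hσ : IsTwoCocycle σ)
    (N : Subgroup G) (hN : (N : Set G) = twistedCenter σ)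
    (ω : G ⧸ N → G ⧸ N → Circle) (hω : IsTwoCocycle ω)
    (hinf : ∃ φ : G → Circle, φ 1 = 1 ∧
      ∀ g h : G, ω (QuotientGroup.mk g) (QuotientGroup.mk h) =
        σ g h * ((φ g)⁻¹ * (φ h)⁻¹ * φ (g * h)))
    (γ : N →* Circle)
    (c : G ⧸ N → G) (hc : ∀ x : G ⧸ N, QuotientGroup.mk (c x) = x) (hc1 : c 1 = 1) :
    twistedCenter (fun g h : G ⧸ N =>
        liftHom γ (c g * c h * (c (g * h))⁻¹) * ω g h) = {1} := by
  obtain ⟨φ, -, hφ⟩ := hinf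
  ext x
  simp only [Set.mem_singleton_iff]
  constructor
  · rintro ⟨-, hx⟩
    have hω' : ∀ y, ω x y = ω y x := by
      intro y
      have h := hx y
      simp only at h
      rw [mul_comm y x, mul_comm (c y) (c x)] at h
      exact mul_left_cancel h
    have hmem : c x ∈ (N : Set G) := by
      rw [hN]
      refine ⟨by simp [Subgroup.mem_center_iff, mul_comm], fun h => ?_⟩
      have h1 := hφ (c x) h
      have h2 := hφ h (c x)
      rw [hc] at h1 h2
      rw [hω', h2, mul_comm h (c x), mul_comm (φ h)⁻¹ (φ (c x))⁻¹] at h1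
      exact (mul_right_cancel h1).symm
    rw [← hc x]
    exact (QuotientGroup.eq_one_iff (c x)).2 hmem
  · rintro rfl
    refine ⟨Subgroup.one_mem _, fun h => ?_⟩
    simp only [one_mul, mul_one, hω.1, hω.2.1]
    rw [mul_comm (c 1) (c h)]
end

section
/- Let M be a discrete abelian group, D a subgroup of M, and σ a 2-cocycle on M such that σ(d,m) = σ(m,d) for all d ∈ D and m ∈ M. Let c : M/D → M be a section of the quotient map with c(e) = e, and define τ(g,h) = σ(c(g),c(h))·σ(c(g)c(h)c(gh)⁻¹, c(gh))⁻¹ for g,h ∈ M/D. Then D ⊆ Z(M,σ), the set Z(M/D,τ) := {g ∈ M/D : τ(g,h) = τ(h,g) for all h ∈ M/D} equals the image of Z(M,σ) under the quotient map M → M/D, and the index of Z(M/D,τ) in M/D equals the index of Z(M,σ) in M. -/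
theorem sym_mul_aux {M : Type*} [CommGroup M] {σ : M → M → Circle} (hσ : IsTwoCocycle σ)
    {g h k : M} (h1 : σ g k = σ k g) (h2 : σ h k = σ k h) : σ (g * h) k = σ k (g * h) := by
  obtain ⟨-, -, H⟩ := hσ
  have e1 := H g h k
  have e2 := H k g h
  have e3 := H g k h
  rw [mul_comm k g] at e2
  rw [mul_comm k h] at e3
  have e4 : σ g h * σ (g * h) k = σ g h * σ k (g * h) := by
    rw [e1, ← e2, h2, ← e3, h1]
  exact mul_left_cancel e4

/-- Let `M` be a discrete abelian group, `D ⊆ M` a subgroup and `σ` a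
2-cocycle on `M` with `σ(d,m) = σ(m,d)` for all `d ∈ D`, `m ∈ M`.  Let `c : M/D → M` be
a section of the quotient map with `c(e) = e` and set
`τ(g,h) = σ(c(g),c(h))·σ(c(g)c(h)c(gh)⁻¹, c(gh))⁻¹`.  Then `D ⊆ Z(M,σ)`, the twisted
center `Z(M/D,τ)` is the image of `Z(M,σ)` under the quotient map, and the index of
`Z(M/D,τ)` in `M/D` equals the index of `Z(M,σ)` in `M`. -/
theorem twistedCenter_quotient_eq_image
    (M : Type*) [CommGroup M] (D : Subgroup M)
    (σ : M → M → Circle) (hσ : IsTwoCocycle σ)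
    (hD : ∀ d ∈ D, ∀ m : M, σ d m = σ m d)
    (c : M ⧸ D → M) (hc : ∀ x : M ⧸ D, QuotientGroup.mk (c x) = x) (hc1 : c 1 = 1)
    (τ : M ⧸ D → M ⧸ D → Circle)
    (hτ : ∀ g h : M ⧸ D,
      τ g h = σ (c g) (c h) * (σ (c g * c h * (c (g * h))⁻¹) (c (g * h)))⁻¹) :
    (D : Set M) ⊆ twistedCenter σ ∧
      twistedCenter τ = QuotientGroup.mk '' twistedCenter σ ∧
      Cardinal.mk (cosetsIn (twistedCenter τ) (Set.univ : Set (M ⧸ D))) =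
        Cardinal.mk (cosetsIn (twistedCenter σ) (Set.univ : Set M)) := by
  have mulD : ∀ z ∈ twistedCenter σ, ∀ d ∈ D, z * d ∈ twistedCenter σ := by
    intro z hz d hd
    refine ⟨by simp [CommGroup.center_eq_top], fun h => ?_⟩
    exact sym_mul_aux hσ (hz.2 h) (hD d hd h)
  have diff : ∀ a b : M, (QuotientGroup.mk a : M ⧸ D) = QuotientGroup.mk b →
      ∃ d ∈ D, b = a * d := by
    intro a b hab
    exact ⟨a⁻¹ * b, QuotientGroup.eq.1 hab, by group⟩
  have tauIff : ∀ g h : M ⧸ D, τ g h = τ h g ↔ σ (c g) (c h) = σ (c h) (c g) := by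
    intro g h
    rw [hτ g h, hτ h g, mul_comm h g, mul_comm (c h) (c g)]
    exact mul_left_inj _
  have main : twistedCenter τ = QuotientGroup.mk '' twistedCenter σ := by
    ext x
    constructor
    · rintro ⟨-, hx⟩
      refine ⟨c x, ⟨by simp [CommGroup.center_eq_top], fun m => ?_⟩, hc x⟩
      obtain ⟨d, hd, hm⟩ := diff (c (QuotientGroup.mk m)) m (hc _)
      rw [hm]
      exact (sym_mul_aux hσ ((tauIff _ _).1 (hx (QuotientGroup.mk m))).symm
        (hD d hd (c x))).symm
    · rintro ⟨z, hz, rfl⟩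
      refine ⟨by simp [CommGroup.center_eq_top], fun h => (tauIff _ _).2 ?_⟩
      obtain ⟨d, hd, hm⟩ := diff z (c (QuotientGroup.mk z)) (hc _).symm
      rw [hm]
      exact (mulD z hz d hd).2 _
  refine ⟨fun d hd => ⟨by simp [CommGroup.center_eq_top], hD d hd⟩, main, ?_⟩
  have key : cosetsIn (twistedCenter τ) (Set.univ : Set (M ⧸ D)) =
      (fun C : Set M => (QuotientGroup.mk '' C : Set (M ⧸ D))) ''
        cosetsIn (twistedCenter σ) (Set.univ : Set M) := by
    have im : ∀ b : M, (QuotientGroup.mk '' ((fun a => b * a) '' twistedCenter σ) : Set (M ⧸ D))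
        = (fun a => (QuotientGroup.mk b : M ⧸ D) * a) '' twistedCenter τ := by
      intro b
      rw [main, Set.image_image, Set.image_image]
      rfl
    ext C
    constructor
    · rintro ⟨b, -, rfl⟩
      refine ⟨_, ⟨c b, trivial, rfl⟩, ?_⟩
      have := im (c b)
      rw [hc] at this
      exact this
    · rintro ⟨_, ⟨b, -, rfl⟩, rfl⟩
      exact ⟨QuotientGroup.mk b, trivial, im b⟩
  have sat : ∀ C ∈ cosetsIn (twistedCenter σ) (Set.univ : Set M),
      (QuotientGroup.mk : M → M ⧸ D) ⁻¹' (QuotientGroup.mk '' C) = C := by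
    rintro _ ⟨b, -, rfl⟩
    refine Set.Subset.antisymm ?_ (Set.subset_preimage_image _ _)
    rintro m ⟨_, ⟨z, hz, rfl⟩, hm⟩
    obtain ⟨d, hd, rfl⟩ := diff _ _ hm
    exact ⟨z * d, mulD z hz d hd, (mul_assoc _ _ _).symm⟩
  rw [key]
  refine Cardinal.mk_image_eq_of_injOn _ _ ?_
  intro A hA B hB hAB
  rw [← sat A hA, ← sat B hB]
  exact congrArg _ hAB
end

section
/- Let G₁ and G₂ be discrete groups, σ₁ a 2-cocycle on G₁, σ₂ a 2-cocycle on G₂, and f : G₁ × G₂ → 𝕋 a bihomomorphism. Then the map σ on G₁ × G₂ defined by σ((g₁,g₂),(h₁,h₂)) = σ₁(g₁,h₁)σ₂(g₂,h₂)f(h₁,g₂) is a 2-cocycle on G₁ × G₂. -/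
/-- Given 2-cocycles `σ₁` on `G₁` and `σ₂` on `G₂` and a
bihomomorphism `f : G₁ × G₂ → 𝕋`, the map
`σ((g₁,g₂),(h₁,h₂)) = σ₁(g₁,h₁)σ₂(g₂,h₂)f(h₁,g₂)` is a 2-cocycle on `G₁ × G₂`. -/
theorem isTwoCocycle_product
    (G₁ G₂ : Type*) [Group G₁] [Group G₂]
    (σ₁ : G₁ → G₁ → Circle) (hσ₁ : IsTwoCocycle σ₁)
    (σ₂ : G₂ → G₂ → Circle) (hσ₂ : IsTwoCocycle σ₂)
    (f : G₁ → G₂ → Circle)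
    (hf₁ : ∀ g g' : G₁, ∀ h : G₂, f (g * g') h = f g h * f g' h)
    (hf₂ : ∀ g : G₁, ∀ h h' : G₂, f g (h * h') = f g h * f g h') :
    IsTwoCocycle (fun g h : G₁ × G₂ => σ₁ g.1 h.1 * σ₂ g.2 h.2 * f h.1 g.2) := by
  have e1 : ∀ h, f 1 h = 1 := fun h => by
    have := hf₁ 1 1 h
    rw [one_mul] at this
    exact left_eq_mul.mp this
  have e2 : ∀ g, f g 1 = 1 := fun g => by
    have := hf₂ g 1 1
    rw [one_mul] at this
    exact left_eq_mul.mp this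
  obtain ⟨a1, a2, a3⟩ := hσ₁
  obtain ⟨b1, b2, b3⟩ := hσ₂
  refine ⟨fun g => by simp [a1, b1, e1], fun g => by simp [a2, b2, e2], ?_⟩
  rintro ⟨g, g'⟩ ⟨h, h'⟩ ⟨k, k'⟩
  simp only [Prod.mk_mul_mk, hf₁, hf₂]
  calc _ = (σ₁ g h * σ₁ (g * h) k) * (σ₂ g' h' * σ₂ (g' * h') k') *
        (f h g' * (f k g' * f k h')) := by ac_rfl
    _ = _ := by rw [a3, b3]; ac_rfl
end

section
/- Let G(3) be the group with underlying set ℤ⁶ and multiplication (r₁,r₂,r₃,r₁₂,r₁₃,r₂₃)(s₁,s₂,s₃,s₁₂,s₁₃,s₂₃) = (r₁+s₁, r₂+s₂, r₃+s₃, r₁₂+s₁₂+r₁s₂, r₁₃+s₁₃+r₁s₃, r₂₃+s₂₃+r₂s₃). Let θ be an irrational real number and define σ : G(3) × G(3) → 𝕋 by σ(r,s) = exp(2πiθ(s₁₃r₂ + s₃(r₁r₂ − r₁₂) + s₁₃r₁ + ½s₃r₁(r₁−1) + r₃(s₁₃ + r₁s₃) + ½r₁s₃(s₃−1))). Then the twisted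 center Z(G(3),σ) is exactly the set of elements of the form (0,0,0,0,0,r₂₃) with r₂₃ ∈ ℤ. -/
/-- The free 2-step nilpotent group on three generators, realized set-theoretically as
`ℤ⁶` with elements `(r₁, r₂, r₃, r₁₂, r₁₃, r₂₃)`. -/
@[ext] structure GThree : Type where
  a1 : ℤ
  a2 : ℤ
  a3 : ℤ
  a12 : ℤ
  a13 : ℤ
  a23 : ℤ

namespace GThree

instance : Mul GThree :=
  ⟨fun r s =>
    ⟨r.a1 + s.a1, r.a2 + s.a2, r.a3 + s.a3, r.a12 + s.a12 + r.a1 * s.a2,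
      r.a13 + s.a13 + r.a1 * s.a3, r.a23 + s.a23 + r.a2 * s.a3⟩⟩

instance : One GThree := ⟨⟨0, 0, 0, 0, 0, 0⟩⟩

instance : Inv GThree :=
  ⟨fun r =>
    ⟨-r.a1, -r.a2, -r.a3, -r.a12 + r.a1 * r.a2, -r.a13 + r.a1 * r.a3,
      -r.a23 + r.a2 * r.a3⟩⟩

@[simp] lemma mul_def (r s : GThree) :
    r * s =
      ⟨r.a1 + s.a1, r.a2 + s.a2, r.a3 + s.a3, r.a12 + s.a12 + r.a1 * s.a2,
        r.a13 + s.a13 + r.a1 * s.a3, r.a23 + s.a23 + r.a2 * s.a3⟩ := rfl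

@[simp] lemma one_def : (1 : GThree) = ⟨0, 0, 0, 0, 0, 0⟩ := rfl

@[simp] lemma inv_def (r : GThree) :
    r⁻¹ =
      ⟨-r.a1, -r.a2, -r.a3, -r.a12 + r.a1 * r.a2, -r.a13 + r.a1 * r.a3,
        -r.a23 + r.a2 * r.a3⟩ := rfl

instance : Group GThree :=
  Group.ofLeftAxioms
    (fun a b c => by ext <;> simp <;> ring)
    (fun a => by ext <;> simp)
    (fun a => by ext <;> simp <;> ring)

end GThree

/-- The 2-cocycle `σ` on `G(3)` associated to the parameter `θ`, given by
`σ(r,s) = exp(2πiθ(s₁₃r₂ + s₃(r₁r₂ − r₁₂) + s₁₃r₁ + ½s₃r₁(r₁−1)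
            + r₃(s₁₃ + r₁s₃) + ½r₁s₃(s₃−1)))`. -/
noncomputable def sigmaGThree (θ : ℝ) (r s : GThree) : Circle :=
  Circle.exp (2 * Real.pi * θ *
    ((s.a13 : ℝ) * (r.a2 : ℝ) + (s.a3 : ℝ) * ((r.a1 : ℝ) * (r.a2 : ℝ) - (r.a12 : ℝ)) +
      (s.a13 : ℝ) * (r.a1 : ℝ) + (1 / 2) * (s.a3 : ℝ) * (r.a1 : ℝ) * ((r.a1 : ℝ) - 1) +
      (r.a3 : ℝ) * ((s.a13 : ℝ) + (r.a1 : ℝ) * (s.a3 : ℝ)) +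
      (1 / 2) * (r.a1 : ℝ) * (s.a3 : ℝ) * ((s.a3 : ℝ) - 1)))

lemma irrational_circle_aux (θ : ℝ) (hθ : Irrational θ) (n : ℤ)
    (h : Circle.exp (2 * Real.pi * θ * (n : ℝ)) = 1) : n = 0 := by
  rw [Circle.exp_eq_one] at h
  obtain ⟨m, hm⟩ := h
  by_contra hn
  have hpi : (2 * Real.pi : ℝ) ≠ 0 := by positivity
  have h1 : θ * n = m := by
    apply mul_left_cancel₀ hpi
    linarith
  exact (hθ.mul_intCast hn).ne_int m h1

/-- For an irrational `θ`, the twisted center of `(G(3), σ)` is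
exactly the set of elements of the form `(0, 0, 0, 0, 0, r₂₃)`. -/
theorem twistedCenter_GThree (θ : ℝ) (hθ : Irrational θ) :
    twistedCenter (sigmaGThree θ) =
      {g : GThree | g.a1 = 0 ∧ g.a2 = 0 ∧ g.a3 = 0 ∧ g.a12 = 0 ∧ g.a13 = 0} := by
  ext g
  simp only [twistedCenter, Set.mem_setOf_eq, Subgroup.mem_center_iff]
  constructor
  · rintro ⟨hc, hs⟩
    have c1 := hc ⟨1, 0, 0, 0, 0, 0⟩
    have c2 := hc ⟨0, 1, 0, 0, 0, 0⟩
    simp only [GThree.mul_def, GThree.mk.injEq] at c1 c2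
    have h1 : g.a1 = 0 := by linarith [c2.2.2.2.1]
    have h2 : g.a2 = 0 := by linarith [c1.2.2.2.1]
    have h3 : g.a3 = 0 := by linarith [c1.2.2.2.2.1]
    have s1 := hs ⟨1, 0, 0, 0, 0, 0⟩
    have s3 := hs ⟨0, 0, 1, 0, 0, 0⟩
    have h13 : g.a13 = 0 := by
      apply irrational_circle_aux θ hθ
      simpa [sigmaGThree, h1, h2, h3] using s1.symm
    have h12 : g.a12 = 0 := by
      apply irrational_circle_aux θ hθ
      simpa [sigmaGThree, h1, h2, h3, h13, Circle.exp_neg] using s3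
    exact ⟨h1, h2, h3, h12, h13⟩
  · rintro ⟨h1, h2, h3, h12, h13⟩
    refine ⟨fun h => ?_, fun h => ?_⟩
    · ext <;> simp [h1, h2, h3, h12, h13, add_comm]
    · simp [sigmaGThree, h1, h2, h3, h12, h13]
end

section
/- Let G(3) be the group with underlying set ℤ⁶ and multiplication (r₁,r₂,r₃,r₁₂,r₁₃,r₂₃)(s₁,s₂,s₃,s₁₂,s₁₃,s₂₃) = (r₁+s₁, r₂+s₂, r₃+s₃, r₁₂+s₁₂+r₁s₂, r₁₃+s₁₃+r₁s₃, r₂₃+s₂₃+r₂s₃), let θ be an irrational real number, and let σ(r,s) = exp(2πiθ(s₁₃r₂ + s₃(r₁r₂ − r₁₂) + s₁₃r₁ + ½s₃r₁(r₁−1) + r₃(s₁₃ + r₁s₃) + ½r₁s₃(s₃−1))). Then the center of the quotient group G(3)/Z(G(3),σ) coincides with the image of the center Z(G(3)) under the quotient map; that is, Z(G(3)/Z(G(3),σ)) = Z(G(3))/Z(G(3),σ). -/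
lemma GThree.exp_aux (θ : ℝ) (hθ : Irrational θ) (m : ℤ)
    (h : Circle.exp (2 * Real.pi * θ * (m : ℝ)) = 1) : m = 0 := by
  rw [Circle.exp_eq_one] at h
  obtain ⟨k, hk⟩ := h
  by_contra hm
  have h2 : θ * (m : ℝ) = k := by
    have hp := Real.two_pi_pos.ne'
    apply mul_left_cancel₀ hp
    linarith
  have h3 := hθ.mul_intCast hm
  rw [h2] at h3
  exact k.not_irrational h3

lemma GThree.twisted_aux (θ : ℝ) (hθ : Irrational θ) (g : GThree)
    (h1 : g.a1 = 0) (h2 : g.a2 = 0) (h3 : g.a3 = 0)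
    (hg : g ∈ twistedCenter (sigmaGThree θ)) : g.a12 = 0 ∧ g.a13 = 0 := by
  have e1 := hg.2 ⟨1, 0, 0, 0, 0, 0⟩
  have e3 := hg.2 ⟨0, 0, 1, 0, 0, 0⟩
  simp only [sigmaGThree, h1, h2, h3] at e1 e3
  have a13 : g.a13 = 0 := by
    apply GThree.exp_aux θ hθ
    simpa using e1.symm
  refine ⟨?_, a13⟩
  have : -g.a12 = 0 := by
    apply GThree.exp_aux θ hθ
    simpa [a13] using e3
  omega

lemma GThree.mem_center_aux (g : GThree)
    (h1 : g.a1 = 0) (h2 : g.a2 = 0) (h3 : g.a3 = 0) : g ∈ Subgroup.center GThree := by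
  rw [Subgroup.mem_center_iff]
  intro h
  ext <;> simp [h1, h2, h3] <;> ring

/-- For an irrational `θ`, the center of the quotient group
`G(3)/Z(G(3),σ)` coincides with the image of the center `Z(G(3))` under the quotient
map. -/
theorem center_quotient_GThree (θ : ℝ) (hθ : Irrational θ)
    (N : Subgroup GThree) [N.Normal]
    (hN : (N : Set GThree) = twistedCenter (sigmaGThree θ)) :
    (Subgroup.center (GThree ⧸ N) : Set (GThree ⧸ N)) =
      QuotientGroup.mk '' (Subgroup.center GThree : Set GThree) := by
  have key : ∀ g h : GThree, (g : GThree ⧸ N) ∈ Subgroup.center (GThree ⧸ N) →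
      g.a1 * h.a2 = h.a1 * g.a2 ∧ g.a1 * h.a3 = h.a1 * g.a3 := by
    intro g h hg
    have e := (Subgroup.mem_center_iff.mp hg) (h : GThree ⧸ N)
    rw [← QuotientGroup.mk_mul, ← QuotientGroup.mk_mul, QuotientGroup.eq] at e
    have e' : (h * g)⁻¹ * (g * h) ∈ twistedCenter (sigmaGThree θ) := by
      rw [← hN]; exact e
    have t := GThree.twisted_aux θ hθ _ (by simp; try ring) (by simp; try ring)
      (by simp; try ring) e'
    simp only [GThree.mul_def, GThree.inv_def] at t
    constructor
    · linarith [t.1]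
    · linarith [t.2]
  ext x
  constructor
  · intro hx
    obtain ⟨g, rfl⟩ := QuotientGroup.mk_surjective x
    have k1 := key g ⟨1, 0, 0, 0, 0, 0⟩ hx
    have k2 := key g ⟨0, 1, 0, 0, 0, 0⟩ hx
    simp at k1 k2
    exact ⟨g, GThree.mem_center_aux g (by omega) (by omega) (by omega), rfl⟩
  · rintro ⟨g, hg, rfl⟩
    refine Subgroup.mem_center_iff.mpr fun y => ?_
    obtain ⟨h, rfl⟩ := QuotientGroup.mk_surjective y
    rw [← QuotientGroup.mk_mul, ← QuotientGroup.mk_mul, Subgroup.mem_center_iff.mp hg h]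
end

section
/- Let d₂ ≥ 1 be an integer and p an integer coprime to d₂, and let H = H(1,d₂) be the group with underlying set ℤ × ℤ² × ℤ² and multiplication (r,s,t)(r',s',t') = (r + r' + t₁s₁' + d₂t₂s₂', s+s', t+t'). Let θ be an irrational real number and define σ : H × H → 𝕋 by σ((r,s,t),(r',s',t')) = exp(2πi(p/d₂)(s₁'r + t₁s₁'(s₁'−1)/2))·exp(2πiθ s₂'t₂). Then the twisted center Z(H,σ) is exactly the set {(r,0,0) : r ∈ d₂ℤ}. -/
/-- The generalized discrete Heisenberg group `H(1, d₂)`, realized set-theoretically as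
`ℤ × ℤ² × ℤ²` with elements `(r, (s₁, s₂), (t₁, t₂))` and multiplication
`(r,s,t)(r',s',t') = (r + r' + t₁s₁' + d₂t₂s₂', s + s', t + t')`. -/
@[ext] structure HeisGen (d2 : ℤ) : Type where
  r : ℤ
  s1 : ℤ
  s2 : ℤ
  t1 : ℤ
  t2 : ℤ

namespace HeisGen

variable {d2 : ℤ}

instance : Mul (HeisGen d2) :=
  ⟨fun x y =>
    ⟨x.r + y.r + x.t1 * y.s1 + d2 * x.t2 * y.s2, x.s1 + y.s1, x.s2 + y.s2,
      x.t1 + y.t1, x.t2 + y.t2⟩⟩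

instance : One (HeisGen d2) := ⟨⟨0, 0, 0, 0, 0⟩⟩

instance : Inv (HeisGen d2) :=
  ⟨fun x =>
    ⟨-x.r + x.t1 * x.s1 + d2 * x.t2 * x.s2, -x.s1, -x.s2, -x.t1, -x.t2⟩⟩

@[simp] lemma mul_def (x y : HeisGen d2) :
    x * y =
      ⟨x.r + y.r + x.t1 * y.s1 + d2 * x.t2 * y.s2, x.s1 + y.s1, x.s2 + y.s2,
        x.t1 + y.t1, x.t2 + y.t2⟩ := rfl

@[simp] lemma one_def : (1 : HeisGen d2) = ⟨0, 0, 0, 0, 0⟩ := rfl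

@[simp] lemma inv_def (x : HeisGen d2) :
    x⁻¹ = ⟨-x.r + x.t1 * x.s1 + d2 * x.t2 * x.s2, -x.s1, -x.s2, -x.t1, -x.t2⟩ := rfl

instance : Group (HeisGen d2) :=
  Group.ofLeftAxioms
    (fun a b c => by ext <;> simp <;> ring)
    (fun a => by ext <;> simp)
    (fun a => by ext <;> simp <;> ring)

end HeisGen

/-- The 2-cocycle `σ` on `H(1,d₂)` given by
`σ((r,s,t),(r',s',t')) = e^{2πi(p/d₂)(s₁'r + t₁s₁'(s₁'−1)/2)}·e^{2πiθs₂'t₂}`. -/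
noncomputable def sigmaHeis (d2 p : ℤ) (θ : ℝ) (x y : HeisGen d2) : Circle :=
  Circle.exp (2 * Real.pi * ((p : ℝ) / (d2 : ℝ)) *
      ((y.s1 : ℝ) * (x.r : ℝ) + (x.t1 : ℝ) * (y.s1 : ℝ) * ((y.s1 : ℝ) - 1) / 2)) *
    Circle.exp (2 * Real.pi * θ * ((y.s2 : ℝ) * (x.t2 : ℝ)))

/-- Let `d₂ ≥ 1`, let `p` be coprime to `d₂` and let `θ` be
irrational.  Then the twisted center of `(H(1,d₂), σ)` is exactly
`{(r, 0, 0) : r ∈ d₂ℤ}`. -/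
theorem twistedCenter_HeisGen (d2 p : ℤ) (hd2 : 1 ≤ d2) (hp : Int.gcd p d2 = 1)
    (θ : ℝ) (hθ : Irrational θ) :
    twistedCenter (sigmaHeis d2 p θ) =
      {g : HeisGen d2 | g.s1 = 0 ∧ g.s2 = 0 ∧ g.t1 = 0 ∧ g.t2 = 0 ∧ d2 ∣ g.r} := by
  have hd0 : (d2 : ℝ) ≠ 0 := by
    have : d2 ≠ 0 := by omega
    exact_mod_cast this
  ext g
  simp only [twistedCenter, Set.mem_setOf_eq, Subgroup.mem_center_iff]
  constructor
  · rintro ⟨hc, hs⟩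
    have h1 := congrArg HeisGen.r (hc ⟨0, 1, 0, 0, 0⟩)
    have h2 := congrArg HeisGen.r (hc ⟨0, 0, 1, 0, 0⟩)
    have h3 := congrArg HeisGen.r (hc ⟨0, 0, 0, 1, 0⟩)
    have h4 := congrArg HeisGen.r (hc ⟨0, 0, 0, 0, 1⟩)
    simp only [HeisGen.mul_def] at h1 h2 h3 h4
    have hd : d2 ≠ 0 := by omega
    have e1 : g.t1 = 0 := by linarith
    have e2 : g.t2 = 0 := by
      have : d2 * g.t2 = 0 := by linarith
      exact (mul_eq_zero.mp this).resolve_left hd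
    have e3 : g.s1 = 0 := by linarith
    have e4 : g.s2 = 0 := by
      have : d2 * g.s2 = 0 := by linarith
      exact (mul_eq_zero.mp this).resolve_left hd
    refine ⟨e3, e4, e1, e2, ?_⟩
    have h5 := hs ⟨0, 1, 0, 0, 0⟩
    simp only [sigmaHeis, e1, e2, e3, e4, ← Circle.exp_add] at h5
    obtain ⟨m, hm⟩ := Circle.exp_eq_exp.mp h5
    have hpi := Real.pi_ne_zero
    have h6 : (p : ℝ) * g.r = d2 * m := by
      field_simp at hm
      push_cast at hm
      linarith
    have h7 : p * g.r = d2 * m := by exact_mod_cast h6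
    have hcop : IsCoprime d2 p := (Int.isCoprime_iff_gcd_eq_one.mpr hp).symm
    exact hcop.dvd_of_dvd_mul_left ⟨m, h7⟩
  · rintro ⟨e3, e4, e1, e2, k, hk⟩
    refine ⟨fun h => ?_, fun h => ?_⟩
    · ext <;> simp [e1, e2, e3, e4, add_comm]
    · simp only [sigmaHeis, e1, e2, e3, e4, ← Circle.exp_add]
      refine Circle.exp_eq_exp.mpr ⟨p * h.s1 * k, ?_⟩
      rw [hk]
      push_cast
      field_simp
      ring
end

section
/- Let Γ = ℤ × H₃(ℤ) be the group with underlying set ℤ⁴ and multiplication (k₁,k₂,k₃,k₄)(l₁,l₂,l₃,l₄) = (k₁+l₁, k₂+l₂+k₄l₃, k₃+l₃, k₄+l₄). For real numbers α, β > 0 define σ_{α,β} : Γ × Γ → 𝕋 by σ_{α,β}((k₁,…,k₄),(l₁,…,l₄)) = exp(2πi(−αβk₁l₃ + β³k₄l₂ + β³k₄²l₃/2)). Then the twisted center Z(Γ,σ_{α,β}) is exactly the set {(k₁,k₂,0,0) : k₁,k₂ ∈ ℤ, αβk₁ ∈ ℤ, β³k₂ ∈ ℤ}. -/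
/-- The group `Γ = ℤ × H₃(ℤ)` (`H₃(ℤ)` the integer Heisenberg group), realized
set-theoretically as `ℤ⁴` with multiplication
`(k₁,k₂,k₃,k₄)(l₁,l₂,l₃,l₄) = (k₁+l₁, k₂+l₂+k₄l₃, k₃+l₃, k₄+l₄)`. -/
@[ext] structure Gam : Type where
  k1 : ℤ
  k2 : ℤ
  k3 : ℤ
  k4 : ℤ

namespace Gam

instance : Mul Gam :=
  ⟨fun x y => ⟨x.k1 + y.k1, x.k2 + y.k2 + x.k4 * y.k3, x.k3 + y.k3, x.k4 + y.k4⟩⟩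

instance : One Gam := ⟨⟨0, 0, 0, 0⟩⟩

instance : Inv Gam :=
  ⟨fun x => ⟨-x.k1, -x.k2 + x.k4 * x.k3, -x.k3, -x.k4⟩⟩

@[simp] lemma mul_def (x y : Gam) :
    x * y = ⟨x.k1 + y.k1, x.k2 + y.k2 + x.k4 * y.k3, x.k3 + y.k3, x.k4 + y.k4⟩ := rfl

@[simp] lemma one_def : (1 : Gam) = ⟨0, 0, 0, 0⟩ := rfl

@[simp] lemma inv_def (x : Gam) :
    x⁻¹ = ⟨-x.k1, -x.k2 + x.k4 * x.k3, -x.k3, -x.k4⟩ := rfl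

instance : Group Gam :=
  Group.ofLeftAxioms
    (fun a b c => by ext <;> simp <;> ring)
    (fun a => by ext <;> simp)
    (fun a => by ext <;> simp <;> ring)

end Gam

/-- The 2-cocycle `σ_{α,β}` on `Γ` given by
`σ_{α,β}(k,l) = exp(2πi(−αβk₁l₃ + β³k₄l₂ + β³k₄²l₃/2))`. -/
noncomputable def sigmaGam (α β : ℝ) (x y : Gam) : Circle :=
  Circle.exp (2 * Real.pi *
    (-(α * β) * (x.k1 : ℝ) * (y.k3 : ℝ) + β ^ 3 * (x.k4 : ℝ) * (y.k2 : ℝ) +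
      β ^ 3 * (x.k4 : ℝ) ^ 2 * (y.k3 : ℝ) / 2))

/-- For `α, β > 0`, the twisted center `Z(Γ, σ_{α,β})` is exactly the
set `{(k₁,k₂,0,0) : αβk₁ ∈ ℤ, β³k₂ ∈ ℤ}`. -/
theorem twistedCenter_Gam (α β : ℝ) (hα : 0 < α) (hβ : 0 < β) :
    twistedCenter (sigmaGam α β) =
      {g : Gam | g.k3 = 0 ∧ g.k4 = 0 ∧ (∃ m : ℤ, α * β * (g.k1 : ℝ) = (m : ℝ)) ∧
        ∃ n : ℤ, β ^ 3 * (g.k2 : ℝ) = (n : ℝ)} := by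
  ext ⟨a, b, c, d⟩
  simp only [twistedCenter, Set.mem_setOf_eq, Subgroup.mem_center_iff]
  constructor
  · rintro ⟨hc, hs⟩
    have h1 := congrArg Gam.k2 (hc ⟨0, 0, 0, 1⟩)
    have h2 := congrArg Gam.k2 (hc ⟨0, 0, 1, 0⟩)
    simp only [Gam.mul_def] at h1 h2
    have hc0 : c = 0 := by linarith
    have hd0 : d = 0 := by linarith
    subst hc0 hd0
    have h3 := hs ⟨0, 0, 1, 0⟩
    have h4 := hs ⟨0, 0, 0, 1⟩
    simp only [sigmaGam, Circle.exp_eq_exp] at h3 h4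
    obtain ⟨m, hm⟩ := h3
    obtain ⟨n, hn⟩ := h4
    have hpi : (2 * Real.pi) ≠ 0 := by positivity
    refine ⟨rfl, rfl, ⟨-m, ?_⟩, ⟨-n, ?_⟩⟩
    · apply mul_left_cancel₀ hpi
      push_cast at hm ⊢
      linarith
    · apply mul_left_cancel₀ hpi
      push_cast at hn ⊢
      linarith
  · rintro ⟨hc0, hd0, ⟨m, hm⟩, ⟨n, hn⟩⟩
    subst hc0 hd0
    refine ⟨fun h => ?_, fun h => ?_⟩
    · ext <;> simp [add_comm]
    · simp only [sigmaGam, Circle.exp_eq_exp]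
      refine ⟨-m * h.k3 - n * h.k4, ?_⟩
      push_cast
      linear_combination (-2 * Real.pi * h.k3) * hm - (2 * Real.pi * h.k4) * hn
end

section
/- Let Γ be the group with underlying set ℤ⁴ and multiplication (k₁,k₂,k₃,k₄)(l₁,l₂,l₃,l₄) = (k₁+l₁, k₂+l₂+k₄l₃, k₃+l₃, k₄+l₄), and for real α, β > 0 let σ_{α,β}(k,l) = exp(2πi(−αβk₁l₃ + β³k₄l₂ + β³k₄²l₃/2)). Then the twisted center Z(Γ,σ_{α,β}) is trivial if and only if both αβ and β³ are irrational. -/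
lemma mem_tc_aux (α β : ℝ) (g : Gam) : g ∈ twistedCenter (sigmaGam α β) ↔
    g.k3 = 0 ∧ g.k4 = 0 ∧ (∃ m : ℤ, α * β * g.k1 = m) ∧ (∃ m : ℤ, β ^ 3 * g.k2 = m) := by
  have hpi : (2 * Real.pi) ≠ 0 := by positivity
  have key : ∀ x y : ℝ, Circle.exp (2 * Real.pi * x) = Circle.exp (2 * Real.pi * y) ↔
      ∃ m : ℤ, x = y + m := by
    intro x y
    rw [Circle.exp_eq_exp]
    refine exists_congr fun m => ?_
    constructor
    · intro h
      apply mul_left_cancel₀ hpi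
      linarith
    · intro h
      rw [h]; ring
  constructor
  · rintro ⟨hc, hs⟩
    rw [Subgroup.mem_center_iff] at hc
    have h3 : g.k3 = 0 := by
      have := congrArg Gam.k2 (hc ⟨0, 0, 0, 1⟩)
      simp at this
      linarith
    have h4 : g.k4 = 0 := by
      have := congrArg Gam.k2 (hc ⟨0, 0, 1, 0⟩)
      simp at this
      linarith
    refine ⟨h3, h4, ?_, ?_⟩
    · obtain ⟨m, hm⟩ := (key _ _).1 (hs ⟨0, 0, 1, 0⟩)
      simp [h3, h4] at hm
      exact ⟨-m, by push_cast; linarith⟩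
    · obtain ⟨m, hm⟩ := (key _ _).1 (hs ⟨0, 0, 0, 1⟩)
      simp [h3, h4] at hm
      exact ⟨-m, by push_cast; linarith⟩
  · rintro ⟨h3, h4, ⟨m, hm⟩, ⟨n, hn⟩⟩
    refine ⟨?_, ?_⟩
    · rw [Subgroup.mem_center_iff]
      intro h
      ext <;> simp [h3, h4] <;> ring
    · intro h
      refine (key _ _).2 ⟨-m * h.k3 - n * h.k4, ?_⟩
      simp only [h3, h4]
      push_cast
      rw [← hm, ← hn]
      ring

lemma not_irr_aux (x : ℝ) (h : ¬ Irrational x) : ∃ a : ℤ, a ≠ 0 ∧ ∃ m : ℤ, x * a = m := by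
  rw [irrational_iff_ne_rational] at h
  push Not at h
  obtain ⟨a, b, hb, h⟩ := h
  refine ⟨b, hb, a, ?_⟩
  have : (b : ℝ) ≠ 0 := by exact_mod_cast hb
  rw [h]; field_simp

lemma irr_aux (x : ℝ) (h : Irrational x) (a m : ℤ) (hm : x * a = m) : a = 0 := by
  by_contra ha
  have : (a : ℝ) ≠ 0 := by exact_mod_cast ha
  exact (irrational_iff_ne_rational x).1 h m a ha (by field_simp; exact hm)

theorem twistedCenter_Gam_trivial_iff (α β : ℝ) (hα : 0 < α) (hβ : 0 < β) :
    twistedCenter (sigmaGam α β) = {1} ↔ Irrational (α * β) ∧ Irrational (β ^ 3) := by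
  constructor
  · intro h
    constructor
    · by_contra hi
      obtain ⟨a, ha, m, hm⟩ := not_irr_aux _ hi
      have : (⟨a, 0, 0, 0⟩ : Gam) ∈ twistedCenter (sigmaGam α β) :=
        (mem_tc_aux α β _).2 ⟨rfl, rfl, ⟨m, hm⟩, ⟨0, by simp⟩⟩
      rw [h] at this
      exact ha (congrArg Gam.k1 this)
    · by_contra hi
      obtain ⟨a, ha, m, hm⟩ := not_irr_aux _ hi
      have : (⟨0, a, 0, 0⟩ : Gam) ∈ twistedCenter (sigmaGam α β) :=
        (mem_tc_aux α β _).2 ⟨rfl, rfl, ⟨0, by simp⟩, ⟨m, hm⟩⟩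
      rw [h] at this
      exact ha (congrArg Gam.k2 this)
  · rintro ⟨h1, h2⟩
    ext g
    rw [mem_tc_aux, Set.mem_singleton_iff]
    constructor
    · rintro ⟨h3, h4, ⟨m, hm⟩, ⟨n, hn⟩⟩
      exact Gam.ext (irr_aux _ h1 _ _ hm) (irr_aux _ h2 _ _ hn) h3 h4
    · rintro rfl
      exact ⟨rfl, rfl, ⟨0, by simp⟩, ⟨0, by simp⟩⟩
end

section
/- Let Γ be the group with underlying set ℤ⁴ and multiplication (k₁,k₂,k₃,k₄)(l₁,l₂,l₃,l₄) = (k₁+l₁, k₂+l₂+k₄l₃, k₃+l₃, k₄+l₄), and for real α, β > 0 let σ_{α,β}(k,l) = exp(2πi(−αβk₁l₃ + β³k₄l₂ + β³k₄²l₃/2)). Suppose that β³ is irrational, that αβ is rational, and that a is the minimal positive integer with aαβ ∈ ℤ. Then the twisted center Z(Γ,σ_{α,β}) is exactly the subgroup {(ak,0,0,0) : k ∈ ℤ} = aℤ × {0} × {0} × {0}. -/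
lemma circle_exp_eq_iff (x y : ℝ) :
    Circle.exp (2 * Real.pi * x) = Circle.exp (2 * Real.pi * y) ↔ ∃ m : ℤ, x = y + m := by
  rw [Circle.exp_eq_exp]
  have hp := Real.pi_pos
  constructor
  · rintro ⟨m, hm⟩
    refine ⟨m, ?_⟩
    have : 2 * Real.pi * x = 2 * Real.pi * (y + m) := by linarith
    exact mul_left_cancel₀ (by positivity) this
  · rintro ⟨m, hm⟩
    exact ⟨m, by rw [hm]; ring⟩

/-- Suppose `α, β > 0`, `β³` is irrational, `αβ` is rational, and `a`
is the minimal positive integer with `aαβ ∈ ℤ`.  Then the twisted center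
`Z(Γ, σ_{α,β})` is exactly the subgroup `aℤ × {0} × {0} × {0}`. -/
theorem twistedCenter_Gam_rational (α β : ℝ) (hα : 0 < α) (hβ : 0 < β)
    (hβ3 : Irrational (β ^ 3)) (a : ℤ) (ha : 0 < a)
    (haZ : ∃ m : ℤ, (a : ℝ) * (α * β) = (m : ℝ))
    (hmin : ∀ b : ℤ, 0 < b → (∃ m : ℤ, (b : ℝ) * (α * β) = (m : ℝ)) → a ≤ b) :
    twistedCenter (sigmaGam α β) =
      {g : Gam | a ∣ g.k1 ∧ g.k2 = 0 ∧ g.k3 = 0 ∧ g.k4 = 0} := by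
  ext g
  simp only [twistedCenter, Set.mem_setOf_eq, Subgroup.mem_center_iff, sigmaGam,
    circle_exp_eq_iff]
  constructor
  · rintro ⟨hc, hs⟩
    have h4 := congrArg Gam.k2 (hc ⟨0, 0, 1, 0⟩)
    have h3 := congrArg Gam.k2 (hc ⟨0, 0, 0, 1⟩)
    simp only [Gam.mul_def] at h3 h4
    have h3' : g.k3 = 0 := by linarith
    have h4' : g.k4 = 0 := by linarith
    obtain ⟨m, hm⟩ := hs ⟨0, 0, 0, 1⟩
    obtain ⟨n, hn⟩ := hs ⟨0, 0, 1, 0⟩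
    simp only [h3', h4', Int.cast_zero, Int.cast_one] at hm hn
    refine ⟨?_, ?_, h3', h4'⟩
    · by_contra hd
      obtain ⟨p, hp⟩ := haZ
      have hpos : 0 < g.k1 % a :=
        lt_of_le_of_ne (Int.emod_nonneg _ ha.ne')
          (fun h => hd (Int.dvd_of_emod_eq_zero h.symm))
      have hlt := Int.emod_lt_of_pos g.k1 ha
      have hle := hmin (g.k1 % a) hpos ⟨-n - (g.k1 / a) * p, by
        rw [Int.emod_def]
        push_cast
        linear_combination (-1 : ℝ) * hn - (((g.k1 / a : ℤ) : ℝ)) * hp⟩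
      omega
    · by_contra h0
      have hirr := hβ3.mul_intCast h0
      exact hirr.ne_int (-m) (by push_cast; linear_combination -hm)
  · rintro ⟨⟨c, hc⟩, h2, h3, h4⟩
    obtain ⟨p, hp⟩ := haZ
    refine ⟨fun h => ?_, fun h => ⟨-(c * p * h.k3), ?_⟩⟩
    · ext <;> simp [h2, h3, h4] <;> ring
    · simp only [h2, h3, h4, hc]
      push_cast
      linear_combination (-(c : ℝ) * h.k3) * hp
end
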